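/- Let μ₁, ν₁, μ₂, ν₂ > 0, set a_k = μ_k + ν_k, r_k = √(μ_k ν_k), and R = μ₁ν₁μ₂ν₂, and let θ > 0 satisfy θ·r₁·r₂ < 1. Then the double contour integral over upper semicircles of radii r₁ and r₂ of (a₁ + 2Re ζ₁)·(a₂ + 2Re ζ₂)·log| (θ^{-1} − ζ₁ζ₂)/(θ^{-1} − ζ₁·conj(ζ₂)) |·(Im ζ₁/ζ₁)·(Im ζ₂/ζ₂) dζ₁ dζ₂ equals −(π²·θ/8)·(4·a₁·a₂·R + 2·θ·R²). -/

import Mathlib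

open Complex Real

/-- The iterated contour integral `∮∮ f(ζ₁,ζ₂) dζ₁ dζ₂` over upper semicircles of radii
`r₁` and `r₂` centered at the origin. -/
noncomputable def semicircleIntegral2 (f : ℂ → ℂ → ℂ) (r₁ r₂ : ℝ) : ℂ :=
  ∫ t₁ in (0 : ℝ)..π, ∫ t₂ in (0 : ℝ)..π,
    f ((r₁ : ℂ) * Complex.exp (Complex.I * t₁)) ((r₂ : ℂ) * Complex.exp (Complex.I * t₂)) *
      (Complex.I * r₁ * Complex.exp (Complex.I * t₁)) *
      (Complex.I * r₂ * Complex.exp (Complex.I * t₂))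

/-!
For `|θ z w| < 1` the Taylor series of `log (1 - x)` separates the kernel into rank-one terms,
`log |(θ⁻¹ - z w) / (θ⁻¹ - z conj(w))| = ∑ n, (2 θ ^ n / n) Im (z ^ n) Im (w ^ n)`,
which converges geometrically on the two semicircles. The double integral is therefore the
sum over `n` of products of one-variable sine moments. By orthogonality of the sines on `[0, π]`,
the weight `(a + 2 Re ζ) Im ζ / ζ`, which pulls back to a combination of `sin t` and `sin 2t`, has
only its first two moments nonzero, so that two terms of the series survive.
-/

open MeasureTheory Metric
open scoped ComplexConjugate

section SineOrthogonality

lemma integral_cos_int_mul_of_ne_zero {m : ℤ} (hm : m ≠ 0) :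
    ∫ t in (0 : ℝ)..π, Real.cos (m * t) = 0 := by
  rw [intervalIntegral.integral_comp_mul_left _ (Int.cast_ne_zero.2 hm), integral_cos]
  simp [Real.sin_int_mul_pi]

lemma integral_sin_nat_mul_mul_sin_nat_mul {k : ℕ} (hk : k ≠ 0) (n : ℕ) :
    ∫ t in (0 : ℝ)..π, Real.sin (k * t) * Real.sin (n * t) = if n = k then π / 2 else 0 := by
  have product_to_sum (t : ℝ) : Real.sin (k * t) * Real.sin (n * t) =
      1 / 2 * Real.cos (((k - n : ℤ) : ℝ) * t) - 1 / 2 * Real.cos (((k + n : ℤ) : ℝ) * t) := by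
    push_cast
    rw [sub_mul, add_mul, Real.cos_sub, Real.cos_add]
    ring
  simp_rw [product_to_sum]
  rw [intervalIntegral.integral_sub (Continuous.intervalIntegrable (by fun_prop) _ _)
      (Continuous.intervalIntegrable (by fun_prop) _ _), intervalIntegral.integral_const_mul,
    intervalIntegral.integral_const_mul, integral_cos_int_mul_of_ne_zero (m := k + n) (by lia)]
  split_ifs with hnk
  · subst hnk
    simp only [sub_self, Int.cast_zero, zero_mul, Real.cos_zero, intervalIntegral.integral_const,
      smul_eq_mul]
    ring
  · rw [integral_cos_int_mul_of_ne_zero (by lia)]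
    ring

end SineOrthogonality

section KernelExpansion

/-- The kernel `log |(θ⁻¹ - z w) / (θ⁻¹ - z conj(w))|` of the double integral. Since
`Real.log 0 = 0`, it takes the value `0`, instead of `±∞`, at its logarithmic singularities. -/
noncomputable def logKernel (θ : ℝ) (z w : ℂ) : ℝ :=
  Real.log ‖((θ : ℂ)⁻¹ - z * w) / ((θ : ℂ)⁻¹ - z * conj w)‖

lemma hasSum_neg_log_norm_one_sub {x : ℂ} (hx : ‖x‖ < 1) :
    HasSum (fun n : ℕ ↦ (x ^ n).re / n) (-Real.log ‖1 - x‖) := by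
  simpa only [Complex.div_natCast_re, Complex.neg_re, Complex.log_re] using
    Complex.hasSum_re (Complex.hasSum_taylorSeries_neg_log hx)

lemma inv_sub_div_inv_sub {K : Type*} [Field K] {θ : K} (hθ : θ ≠ 0) (x y : K) :
    (θ⁻¹ - x) / (θ⁻¹ - y) = (1 - θ * x) / (1 - θ * y) := by
  rw [← mul_div_mul_left _ _ hθ, mul_sub, mul_sub, mul_inv_cancel₀ hθ]

theorem hasSum_logKernel {θ : ℝ} (hθ : θ ≠ 0) {z w : ℂ} (h : ‖θ * (z * w)‖ < 1) :
    HasSum (fun n : ℕ ↦ 2 * θ ^ n / n * (z ^ n).im * (w ^ n).im)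
      (logKernel θ z w) := by
  have h_conj : ‖θ * (z * conj w)‖ < 1 := by simpa only [norm_mul, RCLike.norm_conj] using h
  have norm_one_sub_ne_zero {x : ℂ} (hx : ‖x‖ < 1) : ‖1 - x‖ ≠ 0 := by
    refine norm_ne_zero_iff.2 (sub_ne_zero.2 ?_)
    rintro rfl
    simp at hx
  rw [logKernel, inv_sub_div_inv_sub (Complex.ofReal_ne_zero.2 hθ), norm_div,
    Real.log_div (norm_one_sub_ne_zero h) (norm_one_sub_ne_zero h_conj), ← neg_sub_neg]
  convert! (hasSum_neg_log_norm_one_sub h_conj).sub (hasSum_neg_log_norm_one_sub h) using 2 with n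
  simp only [mul_pow, ← map_pow, ← Complex.ofReal_pow, Complex.mul_re, Complex.ofReal_re,
    Complex.ofReal_im, Complex.conj_re, Complex.conj_im]
  ring

lemma norm_two_mul_pow_div_mul_im_pow_mul_le (θ : ℝ) (z x : ℂ) (n : ℕ) :
    ‖2 * (θ : ℂ) ^ n / n * (z ^ n).im * x‖ ≤ 2 * (|θ| * ‖z‖) ^ n * ‖x‖ := by
  have h_div : |θ| ^ n / n ≤ |θ| ^ n := by
    rcases n.eq_zero_or_pos with rfl | hn
    · simp
    · exact div_le_self (by positivity) (by exact_mod_cast hn)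
  have h_im : |(z ^ n).im| ≤ ‖z‖ ^ n := (Complex.abs_im_le_norm _).trans_eq (norm_pow z n)
  calc ‖2 * (θ : ℂ) ^ n / n * (z ^ n).im * x‖
      = 2 * (|θ| ^ n / n) * |(z ^ n).im| * ‖x‖ := by
        simp [mul_div_assoc]
    _ ≤ 2 * |θ| ^ n * ‖z‖ ^ n * ‖x‖ := by gcongr
    _ = 2 * (|θ| * ‖z‖) ^ n * ‖x‖ := by ring

end KernelExpansion

section SemicircleIntegral

/-- The contour integral `∮ f(ζ) dζ` over the upper semicircle of radius `r` centered at the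
origin, traversed counterclockwise: the one-variable counterpart of `semicircleIntegral2`, written
with Mathlib's parametrization `circleMap`. -/
noncomputable def semicircleIntegral (f : ℂ → ℂ) (r : ℝ) : ℂ :=
  ∫ t in (0 : ℝ)..π, f (circleMap 0 r t) * (circleMap 0 r t * I)

/-- Integrability of `f` over the upper semicircle of radius `r` centered at the origin, the
analogue of `CircleIntegrable`. As there, the factor `dζ/dt` is left out. -/
def SemicircleIntegrable (f : ℂ → ℂ) (r : ℝ) : Prop :=
  IntervalIntegrable (fun t ↦ f (circleMap 0 r t)) volume 0 π

variable {f g : ℂ → ℂ} {r : ℝ}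

lemma semicircleIntegrable_of_continuousOn (hf : ContinuousOn f (sphere 0 |r|)) :
    SemicircleIntegrable f r :=
  (hf.comp_continuous (continuous_circleMap 0 r)
    (circleMap_mem_sphere' 0 r)).intervalIntegrable _ _

lemma semicircleIntegral_congr (h : Set.EqOn f g (sphere 0 |r|)) :
    semicircleIntegral f r = semicircleIntegral g r := by
  simp only [semicircleIntegral, h (circleMap_mem_sphere' 0 r _)]

lemma semicircleIntegral_const_mul (c : ℂ) (f : ℂ → ℂ) (r : ℝ) :
    semicircleIntegral (fun ζ ↦ c * f ζ) r = c * semicircleIntegral f r := by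
  simp only [semicircleIntegral, mul_assoc, intervalIntegral.integral_const_mul]

lemma semicircleIntegral2_eq_iterated (f : ℂ → ℂ → ℂ) (r₁ r₂ : ℝ) :
    semicircleIntegral2 f r₁ r₂ =
      semicircleIntegral (fun z ↦ semicircleIntegral (fun w ↦ f z w) r₂) r₁ := by
  simp only [semicircleIntegral2, semicircleIntegral, ← intervalIntegral.integral_mul_const]
  congr! 4
  simp only [circleMap_zero, mul_comm I]
  ring

lemma norm_mul_mul_circleMap_mul_I_le {y : ℂ} {b : ℝ} (hy : ‖y‖ ≤ b) (x : ℂ) (r t : ℝ) :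
    ‖x * y * (circleMap 0 r t * I)‖ ≤ b * (‖x‖ * |r|) :=
  calc ‖x * y * (circleMap 0 r t * I)‖ = ‖y‖ * (‖x‖ * |r|) := by
        simp only [norm_mul, norm_circleMap_zero, norm_I]
        ring
    _ ≤ b * (‖x‖ * |r|) := by gcongr

lemma exists_norm_semicircleIntegral_mul_le (hg : SemicircleIntegrable g r) :
    ∃ C, ∀ (u : ℂ → ℂ) (b : ℝ), (∀ ζ ∈ sphere (0 : ℂ) |r|, ‖u ζ‖ ≤ b) →
      ‖semicircleIntegral (fun ζ ↦ g ζ * u ζ) r‖ ≤ b * C := by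
  refine ⟨∫ t in (0 : ℝ)..π, ‖g (circleMap 0 r t)‖ * |r|, fun u b hu ↦ ?_⟩
  rw [← intervalIntegral.integral_const_mul]
  exact intervalIntegral.norm_integral_le_of_norm_le Real.pi_pos.le
    (.of_forall fun t _ ↦
      norm_mul_mul_circleMap_mul_I_le (hu _ (circleMap_mem_sphere' 0 r t)) _ r t)
    ((hg.norm.mul_const _).const_mul _)

theorem hasSum_semicircleIntegral_mul {ι : Type*} [Countable ι] {u : ι → ℂ → ℂ} {U : ℂ → ℂ}
    {b : ι → ℝ} (hg : SemicircleIntegrable g r)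
    (hu : ∀ i, ContinuousOn (u i) (sphere 0 |r|)) (hb : Summable b)
    (hub : ∀ i, ∀ ζ ∈ sphere (0 : ℂ) |r|, ‖u i ζ‖ ≤ b i)
    (hU : ∀ ζ ∈ sphere (0 : ℂ) |r|, HasSum (u · ζ) (U ζ)) :
    HasSum (fun i ↦ semicircleIntegral (fun ζ ↦ g ζ * u i ζ) r)
      (semicircleIntegral (fun ζ ↦ g ζ * U ζ) r) := by
  have h_mem := circleMap_mem_sphere' 0 r
  have h_cont := continuous_circleMap 0 r
  refine intervalIntegral.hasSum_integral_of_dominated_convergence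
    (fun i t ↦ b i * (‖g (circleMap 0 r t)‖ * |r|)) (fun i ↦ ?_)
    (fun i ↦ .of_forall fun t _ ↦ norm_mul_mul_circleMap_mul_I_le (hub i _ (h_mem t)) _ r t)
    (.of_forall fun t _ ↦ hb.mul_right _) ?_
    (.of_forall fun t _ ↦ ((hU _ (h_mem t)).mul_left _).mul_right _)
  · exact ((IntervalIntegrable.def' hg).aestronglyMeasurable.mul
      ((hu i).comp_continuous h_cont h_mem).aestronglyMeasurable).mul
      (h_cont.mul continuous_const).aestronglyMeasurable
  · simp only [tsum_mul_right]
    exact (hg.norm.mul_const _).const_mul _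

end SemicircleIntegral

section SineMoments

/-- The `n`-th sine moment `∮ g(ζ) Im(ζⁿ) dζ` of the weight `g` over the upper semicircle of radius
`r`; on that semicircle `Im (ζ ^ n) = r ^ n * sin (n * t)`. -/
noncomputable def sineMoment (g : ℂ → ℂ) (r : ℝ) (n : ℕ) : ℂ :=
  semicircleIntegral (fun ζ ↦ g ζ * (ζ ^ n).im) r

lemma exists_norm_sineMoment_le {g : ℂ → ℂ} {r : ℝ} (hg : SemicircleIntegrable g r) :
    ∃ C, ∀ n, ‖sineMoment g r n‖ ≤ |r| ^ n * C := by
  obtain ⟨C, hC⟩ := exists_norm_semicircleIntegral_mul_le hg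
  refine ⟨C, fun n ↦ hC _ _ fun ζ hζ ↦ ?_⟩
  rw [Complex.norm_real, ← mem_sphere_zero_iff_norm.1 hζ, ← norm_pow]
  exact Complex.abs_im_le_norm _

variable {θ r₁ r₂ : ℝ} {g₁ g₂ : ℂ → ℂ}

lemma hasSum_semicircleIntegral_logKernel (hθ : θ ≠ 0) (h : |θ * r₁ * r₂| < 1)
    (hg₂ : SemicircleIntegrable g₂ r₂) {z : ℂ} (hz : z ∈ sphere 0 |r₁|) :
    HasSum (fun n : ℕ ↦ 2 * (θ : ℂ) ^ n / n * (z ^ n).im * sineMoment g₂ r₂ n)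
      (semicircleIntegral (fun w ↦ g₂ w * logKernel θ z w) r₂) := by
  rw [mem_sphere_zero_iff_norm] at hz
  have h_ratio : |θ| * ‖z‖ * |r₂| < 1 := by rwa [hz, ← abs_mul, ← abs_mul]
  have h_summable : Summable fun n : ℕ ↦ 2 * (|θ| * ‖z‖) ^ n * |r₂| ^ n := by
    simpa only [mul_assoc, ← mul_pow] using
      (summable_geometric_of_lt_one (by positivity) h_ratio).mul_left 2
  have H := hasSum_semicircleIntegral_mul (ι := ℕ) hg₂
    (u := fun n w ↦ 2 * (θ : ℂ) ^ n / n * (z ^ n).im * (w ^ n).im)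
    (U := fun w ↦ logKernel θ z w)
    (fun n ↦ Continuous.continuousOn (by fun_prop)) h_summable
    (fun n w hw ↦ ?_) (fun w hw ↦ ?_)
  · refine H.congr_fun fun n ↦ ?_
    rw [sineMoment, ← semicircleIntegral_const_mul]
    exact semicircleIntegral_congr fun w _ ↦ by ring
  · refine (norm_two_mul_pow_div_mul_im_pow_mul_le θ z _ n).trans ?_
    rw [Complex.norm_real, ← mem_sphere_zero_iff_norm.1 hw, ← norm_pow]
    gcongr
    exact Complex.abs_im_le_norm _
  · have h_lt : ‖θ * (z * w)‖ < 1 := by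
      simpa only [norm_mul, Complex.norm_real, Real.norm_eq_abs, mul_assoc,
        mem_sphere_zero_iff_norm.1 hw] using h_ratio
    exact_mod_cast Complex.hasSum_ofReal.2 (hasSum_logKernel hθ h_lt)

theorem hasSum_semicircleIntegral2_logKernel (hθ : θ ≠ 0) (h : |θ * r₁ * r₂| < 1)
    (hg₁ : SemicircleIntegrable g₁ r₁) (hg₂ : SemicircleIntegrable g₂ r₂) :
    HasSum (fun n : ℕ ↦ 2 * (θ : ℂ) ^ n / n * sineMoment g₁ r₁ n * sineMoment g₂ r₂ n)
      (semicircleIntegral2 (fun z w ↦ g₁ z * g₂ w * logKernel θ z w) r₁ r₂) := by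
  obtain ⟨C, hC⟩ := exists_norm_sineMoment_le hg₂
  have h_ratio : |θ| * |r₁| * |r₂| < 1 := by rwa [← abs_mul, ← abs_mul]
  have h_summable : Summable fun n : ℕ ↦ 2 * (|θ| * |r₁|) ^ n * (|r₂| ^ n * C) := by
    simpa only [mul_pow, mul_assoc] using
      ((summable_geometric_of_lt_one (by positivity) h_ratio).mul_left 2).mul_right C
  have H := hasSum_semicircleIntegral_mul hg₁
    (u := fun n z ↦ 2 * (θ : ℂ) ^ n / n * (z ^ n).im * sineMoment g₂ r₂ n)
    (fun n ↦ Continuous.continuousOn (by fun_prop)) h_summable (fun n z hz ↦ ?_)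
    (fun z hz ↦ hasSum_semicircleIntegral_logKernel hθ h hg₂ hz)
  · simp only [semicircleIntegral2_eq_iterated, mul_assoc (g₁ _), semicircleIntegral_const_mul]
    refine H.congr_fun fun n ↦ ?_
    rw [mul_right_comm, sineMoment.eq_def g₁, ← semicircleIntegral_const_mul]
    exact semicircleIntegral_congr fun z _ ↦ by ring
  · refine (norm_two_mul_pow_div_mul_im_pow_mul_le θ z _ n).trans ?_
    rw [mem_sphere_zero_iff_norm.1 hz]
    gcongr
    exact hC n

end SineMoments

section LinearWeight

/-- The weight `(a + 2 Re ζ) Im ζ / ζ` carried by each of the two contour variables. -/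
noncomputable def linearWeight (a ζ : ℂ) : ℂ :=
  (a + 2 * ζ.re) * (ζ.im / ζ)

lemma semicircleIntegrable_linearWeight (a : ℂ) {r : ℝ} (hr : r ≠ 0) :
    SemicircleIntegrable (linearWeight a) r := by
  refine semicircleIntegrable_of_continuousOn (ContinuousOn.mul (by fun_prop)
    (ContinuousOn.div (by fun_prop) continuousOn_id fun ζ hζ ↦ ?_))
  exact ne_of_mem_sphere hζ (abs_ne_zero.2 hr)

lemma linearWeight_circleMap_mul_im_pow (a : ℂ) {r : ℝ} (hr : r ≠ 0) (n : ℕ) (t : ℝ) :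
    linearWeight a (circleMap 0 r t) * ((circleMap 0 r t ^ n).im : ℂ) * (circleMap 0 r t * I) =
      I * r ^ (n + 1) * a * ((Real.sin ((1 : ℕ) * t) * Real.sin (n * t) : ℝ) : ℂ) +
        I * r ^ (n + 2) * ((Real.sin ((2 : ℕ) * t) * Real.sin (n * t) : ℝ) : ℂ) := by
  have h_ne : circleMap 0 r t ≠ 0 := circleMap_ne_center hr
  rw [linearWeight, circleMap_zero_pow, circleMap_zero_im, circleMap_zero_re, circleMap_zero_im,
    Nat.cast_one, one_mul, Nat.cast_two, Real.sin_two_mul]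
  field_simp
  push_cast
  ring

lemma sineMoment_linearWeight (a : ℂ) {r : ℝ} (hr : r ≠ 0) (n : ℕ) :
    sineMoment (linearWeight a) r n =
      I * (π / 2) * (if n = 1 then a * r ^ 2 else if n = 2 then (r : ℂ) ^ 4 else 0) := by
  simp only [sineMoment, semicircleIntegral, linearWeight_circleMap_mul_im_pow a hr]
  rw [intervalIntegral.integral_add (Continuous.intervalIntegrable (by fun_prop) _ _)
      (Continuous.intervalIntegrable (by fun_prop) _ _), intervalIntegral.integral_const_mul,
    intervalIntegral.integral_const_mul, intervalIntegral.integral_ofReal,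
    intervalIntegral.integral_ofReal, integral_sin_nat_mul_mul_sin_nat_mul one_ne_zero,
    integral_sin_nat_mul_mul_sin_nat_mul two_ne_zero]
  rcases eq_or_ne n 1 with rfl | h₁
  · simp only [↓reduceIte, OfNat.one_ne_ofNat, Complex.ofReal_div, Complex.ofReal_ofNat,
      Complex.ofReal_zero]
    ring
  rcases eq_or_ne n 2 with rfl | h₂
  · simp only [↓reduceIte, OfNat.ofNat_ne_one, Complex.ofReal_div, Complex.ofReal_ofNat,
      Complex.ofReal_zero]
    ring
  · simp [h₁, h₂]

end LinearWeight

theorem semicircle_double_integral_log_kernel_linear_general {θ r₁ r₂ : ℝ} (hθ : θ ≠ 0)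
    (hr₁ : r₁ ≠ 0) (hr₂ : r₂ ≠ 0) (h : |θ * r₁ * r₂| < 1) (a₁ a₂ : ℂ) :
    semicircleIntegral2
      (fun ζ₁ ζ₂ ↦ (a₁ + 2 * ζ₁.re) * (a₂ + 2 * ζ₂.re) *
        (Real.log ‖((θ : ℂ)⁻¹ - ζ₁ * ζ₂) / ((θ : ℂ)⁻¹ - ζ₁ * conj ζ₂)‖ : ℂ) *
        (ζ₁.im / ζ₁) * (ζ₂.im / ζ₂)) r₁ r₂ =
      -((π : ℂ) ^ 2 * θ / 8) * (4 * a₁ * a₂ * (r₁ * r₂) ^ 2 + 2 * θ * ((r₁ * r₂) ^ 2) ^ 2) := by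
  have series := hasSum_semicircleIntegral2_logKernel hθ h
    (semicircleIntegrable_linearWeight a₁ hr₁) (semicircleIntegrable_linearWeight a₂ hr₂)
  simp only [sineMoment_linearWeight _ hr₁, sineMoment_linearWeight _ hr₂] at series
  have integrand_eq (ζ₁ ζ₂ : ℂ) :
      (a₁ + 2 * ζ₁.re) * (a₂ + 2 * ζ₂.re) *
        (Real.log ‖((θ : ℂ)⁻¹ - ζ₁ * ζ₂) / ((θ : ℂ)⁻¹ - ζ₁ * conj ζ₂)‖ : ℂ) *
        (ζ₁.im / ζ₁) * (ζ₂.im / ζ₂) =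
      linearWeight a₁ ζ₁ * linearWeight a₂ ζ₂ * logKernel θ ζ₁ ζ₂ := by
    simp only [linearWeight, logKernel]
    ring
  simp only [integrand_eq]
  rw [← series.tsum_eq, tsum_eq_sum (s := {1, 2}), Finset.sum_pair (by norm_num)]
  · simp only [↓reduceIte, OfNat.ofNat_ne_one, Nat.cast_one, Nat.cast_ofNat]
    linear_combination (π : ℂ) ^ 2 * θ / 4 *
      (2 * a₁ * a₂ * (r₁ * r₂) ^ 2 + θ * (r₁ * r₂) ^ 4) * I_sq
  · intro n hn
    simp only [Finset.mem_insert, Finset.mem_singleton, not_or] at hn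
    simp [hn.1, hn.2]

/-- The double semicircle contour integral of
`(a₁ + 2Re ζ₁)(a₂ + 2Re ζ₂)·log| (θ⁻¹ − ζ₁ζ₂)/(θ⁻¹ − ζ₁·conj ζ₂) |·(Im ζ₁/ζ₁)(Im ζ₂/ζ₂)`
equals `−(π²θ/8)(4a₁a₂R + 2θR²)` where `R = μ₁ν₁μ₂ν₂`. -/
theorem semicircle_double_integral_log_kernel_linear
    (μ₁ ν₁ μ₂ ν₂ : ℝ) (hμ₁ : 0 < μ₁) (hν₁ : 0 < ν₁) (hμ₂ : 0 < μ₂) (hν₂ : 0 < ν₂)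
    (θ : ℝ) (hθ : 0 < θ)
    (a₁ a₂ r₁ r₂ R : ℝ) (ha₁ : a₁ = μ₁ + ν₁) (ha₂ : a₂ = μ₂ + ν₂)
    (hr₁ : r₁ = Real.sqrt (μ₁ * ν₁)) (hr₂ : r₂ = Real.sqrt (μ₂ * ν₂))
    (hR : R = μ₁ * ν₁ * μ₂ * ν₂)
    (h : θ * r₁ * r₂ < 1) :
    semicircleIntegral2
      (fun ζ₁ ζ₂ =>
        ((a₁ : ℂ) + 2 * (ζ₁.re : ℂ)) * ((a₂ : ℂ) + 2 * (ζ₂.re : ℂ)) *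
          ((Real.log (norm
              ((((θ : ℂ))⁻¹ - ζ₁ * ζ₂) / (((θ : ℂ))⁻¹ - ζ₁ * (starRingEnd ℂ) ζ₂))) : ℂ)) *
          ((ζ₁.im : ℂ) / ζ₁) * ((ζ₂.im : ℂ) / ζ₂))
      r₁ r₂ =
      -(((π : ℂ)) ^ 2 * θ / 8) * (4 * a₁ * a₂ * R + 2 * θ * R ^ 2) := by
  have hr₁_pos : 0 < r₁ := by rw [hr₁]; positivity
  have hr₂_pos : 0 < r₂ := by rw [hr₂]; positivity
  have hR_sq : R = (r₁ * r₂) ^ 2 := by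
    rw [hR, hr₁, hr₂, mul_pow, Real.sq_sqrt (by positivity), Real.sq_sqrt (by positivity),
      mul_assoc]
  have h_abs : |θ * r₁ * r₂| < 1 := by rwa [abs_of_pos (by positivity)]
  simpa only [hR_sq, Complex.ofReal_pow, Complex.ofReal_mul] using
    semicircle_double_integral_log_kernel_linear_general hθ.ne' hr₁_pos.ne' hr₂_pos.ne' h_abs a₁ a₂
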